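/- Let Ω_SC := {(a₁,a₂) ∈ ℝ² : a₁a₂ = 0} be the switching cone. For every a = (a₁,a₂) ∈ Ω_SC and every direction d = (d₁,d₂) ∈ ℝ², one has N_{Ω_SC}(a; d) = N^i_{Ω_SC}(a; d) (so Ω_SC is directionally regular), and this common cone equals: ℝ×{0} if a₁ = 0, a₂ ≠ 0, d₁ = 0; {0}×ℝ if a₁ ≠ 0, a₂ = 0, d₂ = 0; ℝ×{0} if a₁ = a₂ = 0, d₁ = 0, d₂ ≠ 0; {0}×ℝ if a₁ = a₂ = 0, d₁ ≠ 0, d₂ = 0; Ω_SC if a₁ = a₂ = d₁ = d₂ = 0; and the empty set in all remaining cases (i.e., when d does not belong to the tangent cone of Ω_SC at a). -/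

import Mathlib

open Filter Topology

/-- The switching cone `Ω_SC = {(a₁, a₂) ∈ ℝ² : a₁ a₂ = 0}`. -/
def OmegaSC : Set (ℝ × ℝ) := {a | a.1 * a.2 = 0}

/-- The tangent (Bouligand) cone to `A` at `x`:
`{d : ∃ tₖ ↓ 0, dₖ → d with x + tₖ dₖ ∈ A for all k}`. -/
def tangentConeSC (A : Set (ℝ × ℝ)) (x : ℝ × ℝ) : Set (ℝ × ℝ) :=
  {d | ∃ (t : ℕ → ℝ) (dk : ℕ → ℝ × ℝ), (∀ k, 0 < t k) ∧ Tendsto t atTop (𝓝 0) ∧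
        Tendsto dk atTop (𝓝 d) ∧ ∀ k, x + t k • dk k ∈ A}

/-- The regular (Fréchet) normal cone to `A` at `x`:
`{ζ : ⟨ζ, y − x⟩ ≤ o(‖y − x‖) for y ∈ A}`. -/
def frechetNormalSC (A : Set (ℝ × ℝ)) (x : ℝ × ℝ) : Set (ℝ × ℝ) :=
  {z | ∀ ε > (0 : ℝ), ∃ δ > (0 : ℝ), ∀ y ∈ A, ‖y - x‖ < δ →
        z.1 * (y.1 - x.1) + z.2 * (y.2 - x.2) ≤ ε * ‖y - x‖}

/-- The limiting (Mordukhovich) normal cone to `A` at `x`. -/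
def limitingNormalSC (A : Set (ℝ × ℝ)) (x : ℝ × ℝ) : Set (ℝ × ℝ) :=
  {z | ∃ (xk zk : ℕ → ℝ × ℝ), (∀ k, xk k ∈ A) ∧ Tendsto xk atTop (𝓝 x) ∧
        Tendsto zk atTop (𝓝 z) ∧ ∀ k, zk k ∈ frechetNormalSC A (xk k)}

/-- The directional limiting normal cone `N_A(x; d)`. -/
def dirNormalSC (A : Set (ℝ × ℝ)) (x d : ℝ × ℝ) : Set (ℝ × ℝ) :=
  {z | ∃ (t : ℕ → ℝ) (dk zk : ℕ → ℝ × ℝ),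
        (∀ k, 0 < t k) ∧ Tendsto t atTop (𝓝 0) ∧ Tendsto dk atTop (𝓝 d) ∧
        Tendsto zk atTop (𝓝 z) ∧
        ∀ k, x + t k • dk k ∈ A ∧ zk k ∈ frechetNormalSC A (x + t k • dk k)}

/-- The cone `N^i_A(x; d)` from the definition of directional regularity. -/
def dirNormalISC (A : Set (ℝ × ℝ)) (x d : ℝ × ℝ) : Set (ℝ × ℝ) :=
  {z | ∀ t : ℕ → ℝ, (∀ k, 0 < t k) → Tendsto t atTop (𝓝 0) →
        ∃ (dk zk : ℕ → ℝ × ℝ), Tendsto dk atTop (𝓝 d) ∧ Tendsto zk atTop (𝓝 z) ∧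
          ∀ k, x + t k • dk k ∈ A ∧ zk k ∈ frechetNormalSC A (x + t k • dk k)}

/-! At a point of `Ω_SC` the regular normals vanish along each coordinate axis through that point.
If `z ∈ N(a; d)` is the limit of regular normals at `a + tₖ dₖ ∈ Ω_SC`, infinitely many of these
points lie on one and the same axis; since an axis is a closed subspace, it contains `a` and `d`,
and `z` is orthogonal to it. Conversely, if an axis contains `a` and `d`, then for any `t > 0`
points `a + t d'` of that axis other than the origin are obtained with `d'` arbitrarily close to
`d`, and at such points every vector orthogonal to the axis is a regular normal. Hence both
`N` and `Nⁱ` consist of the vectors orthogonal to some axis that contains `a` and `d`. -/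

section General

variable {A : Set (ℝ × ℝ)} {x d z : ℝ × ℝ}

theorem mem_tangentConeSC_of_forall_pos (h : ∀ t : ℝ, 0 < t → x + t • d ∈ A) :
    d ∈ tangentConeSC A x :=
  ⟨fun k => 1 / ((k : ℝ) + 1), fun _ => d, fun _ => Nat.one_div_pos_of_nat,
    tendsto_one_div_add_atTop_nhds_zero_nat, tendsto_const_nhds,
    fun _ => h _ Nat.one_div_pos_of_nat⟩

theorem inner_nonpos_of_mem_frechetNormalSC (hz : z ∈ frechetNormalSC A x)
    (hd : d ∈ tangentConeSC A x) : z.1 * d.1 + z.2 * d.2 ≤ 0 := by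
  obtain ⟨t, dk, ht, ht0, hdk, hA⟩ := hd
  have hle : ∀ ε > 0, z.1 * d.1 + z.2 * d.2 ≤ ε * ‖d‖ := by
    intro ε hε
    obtain ⟨δ, hδ, hzδ⟩ := hz ε hε
    have hstep : Tendsto (fun k => ‖t k • dk k‖) atTop (𝓝 0) := by
      simpa using (ht0.smul hdk).norm
    have hinner : Tendsto (fun k => z.1 * (dk k).1 + z.2 * (dk k).2) atTop
        (𝓝 (z.1 * d.1 + z.2 * d.2)) :=
      (hdk.fst_nhds.const_mul _).add (hdk.snd_nhds.const_mul _)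
    refine le_of_tendsto_of_tendsto hinner (hdk.norm.const_mul ε) ?_
    filter_upwards [hstep.eventually_lt_const hδ] with k hk
    have hzk := hzδ _ (hA k) (by rwa [add_sub_cancel_left])
    simp only [add_sub_cancel_left, Prod.fst_add, Prod.snd_add, Prod.smul_fst, Prod.smul_snd,
      smul_eq_mul, norm_smul, Real.norm_of_nonneg (ht k).le] at hzk
    exact le_of_mul_le_mul_left (by linarith) (ht k)
  have hlim : Tendsto (fun ε : ℝ => ε * ‖d‖) (𝓝[>] 0) (𝓝 0) := by
    refine tendsto_nhdsWithin_of_tendsto_nhds ?_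
    simpa using (tendsto_id (x := 𝓝 (0 : ℝ))).mul_const ‖d‖
  exact ge_of_tendsto hlim (eventually_mem_nhdsWithin.mono hle)

theorem mem_frechetNormalSC_of_eventually
    (h : ∀ᶠ y in 𝓝 x, y ∈ A → z.1 * (y.1 - x.1) + z.2 * (y.2 - x.2) ≤ 0) :
    z ∈ frechetNormalSC A x := by
  intro ε hε
  obtain ⟨δ, hδ, hball⟩ := Metric.eventually_nhds_iff.mp h
  refine ⟨δ, hδ, fun y hy hyx => (hball ?_ hy).trans (by positivity)⟩
  rwa [dist_eq_norm]

theorem dirNormalISC_subset_dirNormalSC : dirNormalISC A x d ⊆ dirNormalSC A x d := by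
  intro z hz
  have hpos (k : ℕ) : 0 < 1 / ((k : ℝ) + 1) := Nat.one_div_pos_of_nat
  obtain ⟨dk, zk, hdk, hzk, hA⟩ := hz _ hpos tendsto_one_div_add_atTop_nhds_zero_nat
  exact ⟨_, dk, zk, hpos, tendsto_one_div_add_atTop_nhds_zero_nat, hdk, hzk, hA⟩

theorem mem_dirNormalISC_of_forall_mem_closure
    (h : ∀ t : ℝ, 0 < t →
      d ∈ closure {d' | x + t • d' ∈ A ∧ z ∈ frechetNormalSC A (x + t • d')}) :
    z ∈ dirNormalISC A x d := by
  intro t ht _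
  choose dk hdk hdist using fun k : ℕ =>
    Metric.mem_closure_iff.mp (h (t k) (ht k)) (1 / ((k : ℝ) + 1)) Nat.one_div_pos_of_nat
  refine ⟨dk, fun _ => z, ?_, tendsto_const_nhds, hdk⟩
  refine tendsto_iff_dist_tendsto_zero.mpr (squeeze_zero (fun _ => dist_nonneg) (fun k => ?_)
    (tendsto_one_div_add_atTop_nhds_zero_nat (𝕜 := ℝ)))
  exact dist_comm d (dk k) ▸ (hdist k).le

end General

theorem mem_and_mem_of_frequently_add_smul_mem {ι 𝕜 E : Type*} [DivisionRing 𝕜]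
    [TopologicalSpace 𝕜] [AddCommGroup E] [Module 𝕜 E] [TopologicalSpace E] [ContinuousAdd E]
    [ContinuousSMul 𝕜 E] {V : Submodule 𝕜 E} (hV : IsClosed (V : Set E)) {l : Filter ι}
    {t : ι → 𝕜} {dk : ι → E} {x d : E} (ht : ∀ k, t k ≠ 0) (ht0 : Tendsto t l (𝓝 0))
    (hdk : Tendsto dk l (𝓝 d)) (hmem : ∃ᶠ k in l, x + t k • dk k ∈ V) : x ∈ V ∧ d ∈ V := by
  have hlim : Tendsto (fun k => x + t k • dk k) l (𝓝 x) := by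
    simpa using (ht0.smul hdk).const_add x
  have hx : x ∈ V := hV.mem_of_frequently_of_tendsto hmem hlim
  refine ⟨hx, hV.mem_of_frequently_of_tendsto (hmem.mono fun k hk => ?_) hdk⟩
  exact (V.smul_mem_iff (ht k)).mp ((V.add_mem_iff_right hx).mp hk)

theorem dense_setOf_add_mul_ne_zero {𝕜 : Type*} [NontriviallyNormedField 𝕜] (b : 𝕜) {t : 𝕜}
    (ht : t ≠ 0) : Dense {s | b + t * s ≠ 0} := by
  convert dense_compl_singleton (-b / t) using 1
  ext s
  simp [eq_div_iff ht, eq_neg_iff_add_eq_zero, add_comm, mul_comm]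

section SwitchingCone

variable {a d x z : ℝ × ℝ}

theorem mem_omegaSC_iff : x ∈ OmegaSC ↔ x.1 = 0 ∨ x.2 = 0 := mul_eq_zero

theorem snd_eq_zero_of_mem_frechetNormalSC_omegaSC (hx : x.1 = 0)
    (hz : z ∈ frechetNormalSC OmegaSC x) : z.2 = 0 := by
  have htangent : (0, z.2) ∈ tangentConeSC OmegaSC x :=
    mem_tangentConeSC_of_forall_pos fun t _ => mem_omegaSC_iff.mpr (.inl (by simp [hx]))
  have hsq : z.2 * z.2 ≤ 0 := by simpa using inner_nonpos_of_mem_frechetNormalSC hz htangent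
  exact mul_self_eq_zero.mp (hsq.antisymm (mul_self_nonneg _))

theorem fst_eq_zero_of_mem_frechetNormalSC_omegaSC (hx : x.2 = 0)
    (hz : z ∈ frechetNormalSC OmegaSC x) : z.1 = 0 := by
  have htangent : (z.1, 0) ∈ tangentConeSC OmegaSC x :=
    mem_tangentConeSC_of_forall_pos fun t _ => mem_omegaSC_iff.mpr (.inr (by simp [hx]))
  have hsq : z.1 * z.1 ≤ 0 := by simpa using inner_nonpos_of_mem_frechetNormalSC hz htangent
  exact mul_self_eq_zero.mp (hsq.antisymm (mul_self_nonneg _))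

theorem mem_frechetNormalSC_omegaSC_of_snd_ne_zero (hx₁ : x.1 = 0) (hx₂ : x.2 ≠ 0)
    (hz : z.2 = 0) : z ∈ frechetNormalSC OmegaSC x := by
  refine mem_frechetNormalSC_of_eventually ?_
  filter_upwards [continuous_snd.continuousAt.eventually_ne hx₂] with y hy₂ hy
  have hy₁ : y.1 = 0 := (mem_omegaSC_iff.mp hy).resolve_right hy₂
  simp [hx₁, hy₁, hz]

theorem mem_frechetNormalSC_omegaSC_of_fst_ne_zero (hx₁ : x.1 ≠ 0) (hx₂ : x.2 = 0)
    (hz : z.1 = 0) : z ∈ frechetNormalSC OmegaSC x := by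
  refine mem_frechetNormalSC_of_eventually ?_
  filter_upwards [continuous_fst.continuousAt.eventually_ne hx₁] with y hy₁ hy
  have hy₂ : y.2 = 0 := (mem_omegaSC_iff.mp hy).resolve_left hy₁
  simp [hx₂, hy₂, hz]

theorem mem_dirNormalISC_omegaSC_of_fst_eq_zero (ha : a.1 = 0) (hd : d.1 = 0) (hz : z.2 = 0) :
    z ∈ dirNormalISC OmegaSC a d := by
  refine mem_dirNormalISC_of_forall_mem_closure fun t ht => ?_
  have hclosure : d ∈ closure ({0} ×ˢ {s | a.2 + t * s ≠ 0}) := by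
    rw [closure_prod_eq, (dense_setOf_add_mul_ne_zero a.2 ht.ne').closure_eq]
    simp [Set.mem_prod, hd]
  refine closure_mono ?_ hclosure
  rintro d' ⟨hd'₁ : d'.1 = 0, hd'₂ : a.2 + t * d'.2 ≠ 0⟩
  have hfst : (a + t • d').1 = 0 := by simp [ha, hd'₁]
  exact ⟨mem_omegaSC_iff.mpr (.inl hfst),
    mem_frechetNormalSC_omegaSC_of_snd_ne_zero hfst hd'₂ hz⟩

theorem mem_dirNormalISC_omegaSC_of_snd_eq_zero (ha : a.2 = 0) (hd : d.2 = 0) (hz : z.1 = 0) :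
    z ∈ dirNormalISC OmegaSC a d := by
  refine mem_dirNormalISC_of_forall_mem_closure fun t ht => ?_
  have hclosure : d ∈ closure ({s | a.1 + t * s ≠ 0} ×ˢ {0}) := by
    rw [closure_prod_eq, (dense_setOf_add_mul_ne_zero a.1 ht.ne').closure_eq]
    simp [Set.mem_prod, hd]
  refine closure_mono ?_ hclosure
  rintro d' ⟨hd'₁ : a.1 + t * d'.1 ≠ 0, hd'₂ : d'.2 = 0⟩
  have hsnd : (a + t • d').2 = 0 := by simp [ha, hd'₂]
  exact ⟨mem_omegaSC_iff.mpr (.inr hsnd),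
    mem_frechetNormalSC_omegaSC_of_fst_ne_zero hd'₁ hsnd hz⟩

theorem eq_zero_of_mem_dirNormalSC_omegaSC (hz : z ∈ dirNormalSC OmegaSC a d) :
    (a.1 = 0 ∧ d.1 = 0 ∧ z.2 = 0) ∨ (a.2 = 0 ∧ d.2 = 0 ∧ z.1 = 0) := by
  obtain ⟨t, dk, zk, ht, ht0, hdk, hzk, hk⟩ := hz
  have haxis : ∃ᶠ k in atTop, (a + t k • dk k).1 = 0 ∨ (a + t k • dk k).2 = 0 :=
    Frequently.of_forall fun k => mem_omegaSC_iff.mp (hk k).1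
  rcases frequently_or_distrib.mp haxis with hfst | hsnd
  · obtain ⟨ha, hd⟩ := mem_and_mem_of_frequently_add_smul_mem
      (V := (ContinuousLinearMap.fst ℝ ℝ ℝ).ker) (ContinuousLinearMap.isClosed_ker _)
      (fun k => (ht k).ne') ht0 hdk hfst
    exact .inl ⟨ha, hd, isClosed_singleton.mem_of_frequently_of_tendsto
      (hfst.mono fun k h => snd_eq_zero_of_mem_frechetNormalSC_omegaSC h (hk k).2) hzk.snd_nhds⟩
  · obtain ⟨ha, hd⟩ := mem_and_mem_of_frequently_add_smul_mem
      (V := (ContinuousLinearMap.snd ℝ ℝ ℝ).ker) (ContinuousLinearMap.isClosed_ker _)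
      (fun k => (ht k).ne') ht0 hdk hsnd
    exact .inr ⟨ha, hd, isClosed_singleton.mem_of_frequently_of_tendsto
      (hsnd.mono fun k h => fst_eq_zero_of_mem_frechetNormalSC_omegaSC h (hk k).2) hzk.fst_nhds⟩

theorem mem_dirNormalISC_omegaSC_iff : z ∈ dirNormalISC OmegaSC a d ↔
    (a.1 = 0 ∧ d.1 = 0 ∧ z.2 = 0) ∨ (a.2 = 0 ∧ d.2 = 0 ∧ z.1 = 0) := by
  refine ⟨fun hz => eq_zero_of_mem_dirNormalSC_omegaSC (dirNormalISC_subset_dirNormalSC hz), ?_⟩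
  rintro (⟨ha, hd, hz⟩ | ⟨ha, hd, hz⟩)
  · exact mem_dirNormalISC_omegaSC_of_fst_eq_zero ha hd hz
  · exact mem_dirNormalISC_omegaSC_of_snd_eq_zero ha hd hz

theorem dirNormalSC_omegaSC_eq_dirNormalISC :
    dirNormalSC OmegaSC a d = dirNormalISC OmegaSC a d :=
  Set.Subset.antisymm
    (fun _ hz => mem_dirNormalISC_omegaSC_iff.mpr (eq_zero_of_mem_dirNormalSC_omegaSC hz))
    dirNormalISC_subset_dirNormalSC

theorem mem_dirNormalSC_omegaSC_iff : z ∈ dirNormalSC OmegaSC a d ↔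
    (a.1 = 0 ∧ d.1 = 0 ∧ z.2 = 0) ∨ (a.2 = 0 ∧ d.2 = 0 ∧ z.1 = 0) := by
  rw [dirNormalSC_omegaSC_eq_dirNormalISC, mem_dirNormalISC_omegaSC_iff]

end SwitchingCone

/-- the switching cone is directionally regular, and its directional
limiting normal cone is given by the indicated case analysis. -/
theorem dirNormal_omegaSC (a : ℝ × ℝ) (ha : a ∈ OmegaSC) (d : ℝ × ℝ) :
    dirNormalSC OmegaSC a d = dirNormalISC OmegaSC a d ∧
    (a.1 = 0 ∧ a.2 ≠ 0 ∧ d.1 = 0 → dirNormalSC OmegaSC a d = {z : ℝ × ℝ | z.2 = 0}) ∧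
    (a.1 ≠ 0 ∧ a.2 = 0 ∧ d.2 = 0 → dirNormalSC OmegaSC a d = {z : ℝ × ℝ | z.1 = 0}) ∧
    (a.1 = 0 ∧ a.2 = 0 ∧ d.1 = 0 ∧ d.2 ≠ 0 →
      dirNormalSC OmegaSC a d = {z : ℝ × ℝ | z.2 = 0}) ∧
    (a.1 = 0 ∧ a.2 = 0 ∧ d.1 ≠ 0 ∧ d.2 = 0 →
      dirNormalSC OmegaSC a d = {z : ℝ × ℝ | z.1 = 0}) ∧
    (a.1 = 0 ∧ a.2 = 0 ∧ d.1 = 0 ∧ d.2 = 0 → dirNormalSC OmegaSC a d = OmegaSC) ∧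
    (¬(a.1 = 0 ∧ a.2 ≠ 0 ∧ d.1 = 0) ∧ ¬(a.1 ≠ 0 ∧ a.2 = 0 ∧ d.2 = 0) ∧
      ¬(a.1 = 0 ∧ a.2 = 0 ∧ d.1 = 0 ∧ d.2 ≠ 0) ∧
      ¬(a.1 = 0 ∧ a.2 = 0 ∧ d.1 ≠ 0 ∧ d.2 = 0) ∧
      ¬(a.1 = 0 ∧ a.2 = 0 ∧ d.1 = 0 ∧ d.2 = 0) →
      dirNormalSC OmegaSC a d = ∅) := by
  refine ⟨dirNormalSC_omegaSC_eq_dirNormalISC, ?_, ?_, ?_, ?_, ?_, ?_⟩ <;> intro h <;> ext z <;>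
    simp only [mem_dirNormalSC_omegaSC_iff, mem_omegaSC_iff, Set.mem_ofPred_eq,
      Set.mem_empty_iff_false] <;>
    tauto
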